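/- Let F(u,v) be a positive harmonic function on a neighborhood of the horizontal strip {(u,v) : 0 ≤ v ≤ C}, C > 0, satisfying F(u+2πb,v)=F(u,v). Then F(u,v) = Σ_{k≠0}(a_k e^{kv/b} cos(ku/b) + b_k e^{kv/b} sin(ku/b)) + a_0(1 − v/C) + b_0 v for some real a_k, b_k with a_0 ≥ 0 and b_0 ≥ 0. -/

import Mathlib

open Real

/-!
Expand each slice `u ↦ F (u, v)` in a Fourier series. Integrating by parts twice in `u`,
harmonicity turns into `cₙ'' = (n / b)² cₙ` for the coefficients, so `c₀` is affine, interpolating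
the means of `F` over the two boundary lines, and for `n ≠ 0` the coefficient `cₙ` is the sum of
`(cₙ ± (b / n) cₙ') / 2`, which are multiples of `exp (± n v / b)`. Each of these two families is
summable at every `v` because, up to constants, `cₙ` and `cₙ' / n` are `1 / n` times coefficients
of the continuous functions `∂F/∂u` and `∂F/∂v`, which are square-summable by Parseval. The series
can therefore be regrouped by the exponent of `v`.
-/

open Set Function MeasureTheory

section LinearODE

variable {E : Type*} [NormedAddCommGroup E] [NormedSpace ℝ E] {s : Set ℝ} {G G' : ℝ → E} {x y : ℝ}

lemma eq_of_hasDerivWithinAt_zero (hs : Convex ℝ s) (hG : ∀ t ∈ s, HasDerivWithinAt G 0 s t)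
    (hx : x ∈ s) (hy : y ∈ s) : G x = G y := by
  have hle : ‖G x - G y‖ ≤ 0 * ‖x - y‖ :=
    hs.norm_image_sub_le_of_norm_hasDerivWithin_le hG (fun _ _ ↦ norm_zero.le) hy hx
  rwa [zero_mul, norm_le_zero_iff, sub_eq_zero] at hle

lemma eq_add_smul_of_hasDerivWithinAt_zero (hs : Convex ℝ s)
    (hG : ∀ t ∈ s, HasDerivWithinAt G (G' t) s t) (hG' : ∀ t ∈ s, HasDerivWithinAt G' 0 s t)
    (hx : x ∈ s) (hy : y ∈ s) : G y = G x + (y - x) • G' x := by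
  have hconst : ∀ t ∈ s, HasDerivWithinAt (fun t ↦ G t - (t - x) • G' x) 0 s t := fun t ht ↦ by
    have hlin : HasDerivWithinAt (fun t ↦ (t - x) • G' x) ((1 : ℝ) • G' x) s t :=
      ((hasDerivWithinAt_id t s).sub_const x).smul_const (G' x)
    refine ((hG t ht).sub hlin).congr_deriv ?_
    rw [one_smul, eq_of_hasDerivWithinAt_zero hs hG' ht hx, sub_self]
  have heq := eq_of_hasDerivWithinAt_zero hs hconst hy hx
  rwa [sub_self, zero_smul, sub_zero, sub_eq_iff_eq_add] at heq

lemma eq_exp_smul_of_hasDerivWithinAt (hs : Convex ℝ s) (l : ℝ)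
    (hG : ∀ t ∈ s, HasDerivWithinAt G (l • G t) s t) (hx : x ∈ s) (hy : y ∈ s) :
    G y = exp (l * (y - x)) • G x := by
  have hexp (t : ℝ) :
      HasDerivWithinAt (fun t ↦ exp (-l * (t - x))) (exp (-l * (t - x)) * (-l * 1)) s t :=
    (((hasDerivWithinAt_id t s).sub_const x).const_mul (-l)).exp
  have hconst : ∀ t ∈ s, HasDerivWithinAt (fun t ↦ exp (-l * (t - x)) • G t) 0 s t :=
    fun t ht ↦ ((hexp t).smul (hG t ht)).congr_deriv (by module)
  have heq : exp (-l * (y - x)) • G y = G x := by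
    simpa using eq_of_hasDerivWithinAt_zero hs hconst hy hx
  rw [← heq, smul_smul, ← exp_add, neg_mul, add_neg_cancel, exp_zero, one_smul]

-- `G'' - l² G = (d/dt - l) (G' + l G)`, so `G' + l G` solves a first-order equation.
lemma add_inv_smul_eq_exp_smul_of_hasDerivWithinAt (hs : Convex ℝ s) {l : ℝ} (hl : l ≠ 0)
    (hG : ∀ t ∈ s, HasDerivWithinAt G (G' t) s t)
    (hG' : ∀ t ∈ s, HasDerivWithinAt G' (l ^ 2 • G t) s t) (hx : x ∈ s) (hy : y ∈ s) :
    G y + l⁻¹ • G' y = exp (l * (y - x)) • (G x + l⁻¹ • G' x) := by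
  refine eq_exp_smul_of_hasDerivWithinAt (G := fun t ↦ G t + l⁻¹ • G' t) hs l
    (fun t ht ↦ ((hG t ht).add ((hG' t ht).const_smul l⁻¹)).congr_deriv ?_) hx hy
  match_scalars <;> field_simp

end LinearODE

section PartialDerivative

variable {E : Type*} [NormedAddCommGroup E] [NormedSpace ℝ E]

/-- The partial derivative `∂f/∂v` of a function of `(u, v) ∈ ℝ × ℝ`, as a function of `(u, v)`. -/
noncomputable def derivSnd (f : ℝ × ℝ → E) (p : ℝ × ℝ) : E :=
  deriv (fun v ↦ f (p.1, v)) p.2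

variable {f : ℝ × ℝ → E} {U : Set (ℝ × ℝ)} {p : ℝ × ℝ}

lemma hasDerivAt_fderiv_apply_snd (hf : DifferentiableAt ℝ f p) :
    HasDerivAt (fun v ↦ f (p.1, v)) (fderiv ℝ f p (0, 1)) p.2 :=
  hf.hasFDerivAt.comp_hasDerivAt p.2 ((hasDerivAt_const p.2 p.1).prodMk (hasDerivAt_id p.2))

lemma hasDerivAt_derivSnd (hf : DifferentiableAt ℝ f p) :
    HasDerivAt (fun v ↦ f (p.1, v)) (derivSnd f p) p.2 :=
  (hasDerivAt_fderiv_apply_snd hf).differentiableAt.hasDerivAt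

lemma contDiffOn_derivSnd {m n : WithTop ℕ∞} (hU : IsOpen U) (hf : ContDiffOn ℝ n f U)
    (hmn : m + 1 ≤ n) : ContDiffOn ℝ m (derivSnd f) U := by
  have hdiff : ∀ p ∈ U, DifferentiableAt ℝ f p := fun p hp ↦
    (hf.contDiffAt (hU.mem_nhds hp)).differentiableAt
      (ne_of_gt (lt_of_lt_of_le (by simp) hmn))
  exact ((hf.fderiv_of_isOpen hU hmn).clm_apply contDiffOn_const).congr
    fun p hp ↦ (hasDerivAt_fderiv_apply_snd (hdiff p hp)).deriv

end PartialDerivative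

section LeibnizRule

variable {E : Type*} [NormedAddCommGroup E] {U : Set (ℝ × ℝ)} {a b v : ℝ}

lemma exists_norm_le_of_continuousOn_nhds_segment {H : ℝ × ℝ → E} (hU : IsOpen U)
    (hH : ContinuousOn H U) (hv : uIcc a b ×ˢ {v} ⊆ U) :
    ∃ M, ∃ δ > 0, uIcc a b ×ˢ Metric.closedBall v δ ⊆ U ∧
      ∀ p ∈ uIcc a b ×ˢ Metric.closedBall v δ, ‖H p‖ ≤ M := by
  obtain ⟨A, W, -, hW, habA, hvW, hAW⟩ :=
    generalized_tube_lemma isCompact_uIcc isCompact_singleton hU hv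
  obtain ⟨δ, hδ, hδW⟩ :=
    Metric.nhds_basis_closedBall.mem_iff.1 (hW.mem_nhds (hvW (mem_singleton v)))
  have hsub : uIcc a b ×ˢ Metric.closedBall v δ ⊆ U := (prod_mono habA hδW).trans hAW
  obtain ⟨M, hM⟩ := (isCompact_uIcc.prod (isCompact_closedBall v δ)).exists_bound_of_continuousOn
    (hH.mono hsub)
  exact ⟨M, δ, hδ, hsub, hM⟩

lemma hasDerivAt_intervalIntegral_of_continuousOn [NormedSpace ℝ E] {H H' : ℝ × ℝ → E}
    (hU : IsOpen U) (hH : ContinuousOn H U) (hH' : ContinuousOn H' U)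
    (hderiv : ∀ p ∈ U, HasDerivAt (fun y ↦ H (p.1, y)) (H' p) p.2)
    (hv : uIcc a b ×ˢ {v} ⊆ U) :
    HasDerivAt (fun y ↦ ∫ x in a..b, H (x, y)) (∫ x in a..b, H' (x, v)) v := by
  obtain ⟨M, δ, hδ, hsub, hM⟩ := exists_norm_le_of_continuousOn_nhds_segment hU hH' hv
  have hball : Metric.closedBall v δ ∈ nhds v := Metric.closedBall_mem_nhds v hδ
  have hslice {K : ℝ × ℝ → E} (hK : ContinuousOn K U) {y : ℝ} (hy : y ∈ Metric.closedBall v δ) :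
      IntervalIntegrable (fun x ↦ K (x, y)) volume a b :=
    (hK.comp (by fun_prop) fun x hx ↦ hsub ⟨hx, hy⟩).intervalIntegrable
  refine (intervalIntegral.hasDerivAt_integral_of_dominated_loc_of_deriv_le
    (F := fun y x ↦ H (x, y)) (F' := fun y x ↦ H' (x, y)) (bound := fun _ ↦ M) hball
    ?_ ?_ ?_ ?_ intervalIntegrable_const ?_).2
  · filter_upwards [hball] with y hy using (hslice hH hy).def'.aestronglyMeasurable
  · exact hslice hH (mem_of_mem_nhds hball)
  · exact (hslice hH' (mem_of_mem_nhds hball)).def'.aestronglyMeasurable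
  · exact .of_forall fun x hx y hy ↦ hM (x, y) ⟨uIoc_subset_uIcc hx, hy⟩
  · exact .of_forall fun x hx y hy ↦ hderiv (x, y) (hsub ⟨uIoc_subset_uIcc hx, hy⟩)

end LeibnizRule

section FourierCoeffOn

variable {a b : ℝ} {f f' : ℝ → ℂ}

lemma fourierCoeffOn_zero {E : Type*} [NormedAddCommGroup E] [NormedSpace ℂ E] (hab : a < b)
    (f : ℝ → E) : fourierCoeffOn hab f 0 = ⨍ x in a..b, f x := by
  simp [fourierCoeffOn_eq_integral, interval_average_eq]

lemma fourierCoeffOn_hasDerivAt_of_eq (hab : a < b) (hf : ∀ x ∈ uIcc a b, HasDerivAt f (f' x) x)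
    (hf' : IntervalIntegrable f' volume a b) (heq : f a = f b) (n : ℤ) :
    fourierCoeffOn hab f' n = 2 * π * Complex.I * n / (b - a) * fourierCoeffOn hab f n := by
  have hba : (b - a : ℂ) ≠ 0 := by exact_mod_cast (sub_pos.2 hab).ne'
  rcases eq_or_ne n 0 with rfl | hn
  · rw [fourierCoeffOn_zero, interval_average_eq,
      intervalIntegral.integral_eq_sub_of_hasDerivAt hf hf', heq]
    simp
  · rw [fourierCoeffOn_of_hasDerivAt hab hn hf hf', heq]
    have hnC : (n : ℂ) ≠ 0 := mod_cast hn
    field_simp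
    simp

lemma summable_fourierCoeffOn_div (hab : a < b)
    (hf : MemLp f 2 (volume.restrict (Ioc a b))) :
    Summable fun n : ℤ ↦ fourierCoeffOn hab f n / n := by
  have hParseval : Summable fun n ↦ ‖fourierCoeffOn hab f n‖ ^ 2 :=
    (hasSum_sq_fourierCoeffOn hab hf).summable
  have hInv : Summable fun n : ℤ ↦ ‖(n : ℂ)‖⁻¹ ^ 2 := by
    simpa using Real.summable_one_div_int_pow.2 one_lt_two
  refine .of_norm_bounded (hParseval.add hInv) fun n ↦ ?_
  rw [norm_div, div_eq_mul_inv]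
  nlinarith [two_mul_le_add_sq ‖fourierCoeffOn hab f n‖ ‖(n : ℂ)‖⁻¹,
    mul_nonneg (norm_nonneg (fourierCoeffOn hab f n)) (inv_nonneg.2 (norm_nonneg (n : ℂ)))]

lemma memLp_two_of_continuousOn_Icc {E : Type*} [NormedAddCommGroup E] {f : ℝ → E}
    (hf : ContinuousOn f (Icc a b)) :
    MemLp f 2 (volume.restrict (Ioc a b)) := by
  rw [memLp_two_iff_integrable_sq_norm
    ((hf.mono Ioc_subset_Icc_self).aestronglyMeasurable measurableSet_Ioc)]
  exact ((hf.norm.pow 2).integrableOn_Icc).mono_set Ioc_subset_Icc_self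

lemma periodic_deriv {E : Type*} [NormedAddCommGroup E] [NormedSpace ℝ E] {g : ℝ → E} {T : ℝ}
    (hg : Periodic g T) : Periodic (deriv g) T := fun x ↦ by
  rw [← deriv_comp_add_const, hg.funext]

lemma fourierCoeffOn_deriv_of_periodic (hab : a < b) (hf : ContDiff ℝ 1 f)
    (hper : Periodic f (b - a)) (n : ℤ) :
    fourierCoeffOn hab (deriv f) n = 2 * π * Complex.I * n / (b - a) * fourierCoeffOn hab f n := by
  refine fourierCoeffOn_hasDerivAt_of_eq hab
    (fun x _ ↦ (hf.differentiable one_ne_zero x).hasDerivAt)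
    ((hf.continuous_deriv le_rfl).intervalIntegrable a b) ?_ n
  simpa using (hper a).symm

lemma fourierCoeffOn_deriv_deriv_of_periodic (hab : a < b) (hf : ContDiff ℝ 2 f)
    (hper : Periodic f (b - a)) (n : ℤ) :
    fourierCoeffOn hab (deriv (deriv f)) n
      = -(2 * π * n / (b - a)) ^ 2 * fourierCoeffOn hab f n := by
  rw [fourierCoeffOn_deriv_of_periodic hab hf.deriv' (periodic_deriv hper),
    fourierCoeffOn_deriv_of_periodic hab (hf.of_le one_le_two) hper]
  linear_combination (2 * π * n / (b - a)) ^ 2 * fourierCoeffOn hab f n * Complex.I_sq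

lemma summable_fourierCoeffOn_of_periodic (hab : a < b) (hf : ContDiff ℝ 1 f)
    (hper : Periodic f (b - a)) : Summable (fourierCoeffOn hab f) := by
  have hba : (b - a : ℂ) ≠ 0 := by exact_mod_cast (sub_pos.2 hab).ne'
  have hderiv := summable_fourierCoeffOn_div hab
    (memLp_two_of_continuousOn_Icc (hf.continuous_deriv le_rfl).continuousOn)
  refine (hderiv.mul_left ((b - a) / (2 * π * Complex.I))).congr_cofinite ?_
  filter_upwards [(finite_singleton (0 : ℤ)).compl_mem_cofinite] with n hn
  have hnC : (n : ℂ) ≠ 0 := mod_cast hn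
  rw [fourierCoeffOn_deriv_of_periodic hab hf hper]
  field_simp

lemma fourier_apply_of_eq_two_pi_mul {T r : ℝ} (hT : T = 2 * π * r) (n : ℤ) (u : ℝ) :
    fourier n (u : AddCircle T) = Complex.exp ((n * u / r : ℝ) * Complex.I) := by
  have hpi : (2 * π : ℂ) ≠ 0 := by simp
  rw [fourier_coe_apply, hT]
  push_cast
  rw [← mul_div_mul_left (n * u : ℂ) r hpi]
  ring_nf

lemma hasSum_fourierCoeffOn_of_periodic (hab : a < b) (hf : Continuous f)
    (hper : Periodic f (b - a)) (hsum : Summable (fourierCoeffOn hab f)) (x : ℝ) :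
    HasSum (fun n ↦ fourierCoeffOn hab f n * fourier n (x : AddCircle (b - a))) (f x) := by
  have : Fact (0 < b - a) := ⟨sub_pos.2 hab⟩
  let g : C(AddCircle (b - a), ℂ) := ⟨hper.lift, continuous_coinduced_dom.mpr hf⟩
  have hcoeff : fourierCoeff g = fourierCoeffOn hab f := funext fun n ↦ by
    rw [fourierCoeff_eq_intervalIntegral _ n a, fourierCoeffOn_eq_integral, add_sub_cancel]
    rfl
  have hseries := has_pointwise_sum_fourier_series_of_summable (f := g) (hcoeff ▸ hsum)
    (x : AddCircle (b - a))
  rwa [hcoeff] at hseries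

end FourierCoeffOn

section SliceFourierCoeff

variable {a b v : ℝ} {U : Set (ℝ × ℝ)}

/-- The `n`-th Fourier coefficient on `[a, b]` of the restriction of `f : ℝ × ℝ → E` to the
horizontal line at height `v`, as a function of `v`. -/
noncomputable def sliceFourierCoeff {E : Type*} [NormedAddCommGroup E] [NormedSpace ℂ E]
    (hab : a < b) (f : ℝ × ℝ → E) (n : ℤ) (v : ℝ) : E :=
  fourierCoeffOn hab (fun u ↦ f (u, v)) n

lemma hasDerivAt_sliceFourierCoeff {E : Type*} [NormedAddCommGroup E] [NormedSpace ℂ E]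
    {f : ℝ × ℝ → E} (hab : a < b) (hU : IsOpen U) (hf : ContDiffOn ℝ 1 f U)
    (hv : uIcc a b ×ˢ {v} ⊆ U) (n : ℤ) :
    HasDerivAt (sliceFourierCoeff hab f n) (sliceFourierCoeff hab (derivSnd f) n v) v := by
  have hfourier : Continuous fun p : ℝ × ℝ ↦ fourier (-n) (p.1 : AddCircle (b - a)) :=
    (fourier (-n)).continuous.comp ((AddCircle.continuous_mk' (b - a)).comp continuous_fst)
  have hdiff : ∀ p ∈ U, DifferentiableAt ℝ f p := fun p hp ↦
    (hf.contDiffAt (hU.mem_nhds hp)).differentiableAt one_ne_zero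
  have hintegral := hasDerivAt_intervalIntegral_of_continuousOn hU
    (H := fun p ↦ fourier (-n) (p.1 : AddCircle (b - a)) • f p)
    (H' := fun p ↦ fourier (-n) (p.1 : AddCircle (b - a)) • derivSnd f p)
    (hfourier.continuousOn.smul hf.continuousOn)
    (hfourier.continuousOn.smul (contDiffOn_derivSnd (m := 0) hU hf le_rfl).continuousOn)
    (fun p hp ↦ (hasDerivAt_derivSnd (hdiff p hp)).fun_const_smul
      (fourier (-n) (p.1 : AddCircle (b - a)))) hv
  have hcoeff (g : ℝ × ℝ → E) : sliceFourierCoeff hab g n = fun y ↦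
      (1 / (b - a)) • ∫ x in a..b, fourier (-n) (x : AddCircle (b - a)) • g (x, y) :=
    funext fun y ↦ fourierCoeffOn_eq_integral _ n hab
  rw [hcoeff, hcoeff]
  exact hintegral.const_smul (1 / (b - a))

end SliceFourierCoeff

lemma hasSum_subtype_ne {ι α : Type*} [AddCommGroup α] [TopologicalSpace α]
    [IsTopologicalAddGroup α] {f : ι → α} {S : α} (hf : HasSum f S) (i : ι) :
    HasSum (fun k : {k : ι // k ≠ i} ↦ f k) (S - f i) := by
  refine ((hasSum_unique (f ∘ ((↑) : ({i} : Set ι) → ι))).hasSum_compl_iff (a₂ := S - f i)).2 ?_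
  simpa using hf

section PeriodicHarmonic

/-- `f` is harmonic on the strip `{(u, v) | v ∈ s}`, of class `C²` in a neighbourhood of it, and
`T`-periodic in `u` on it. -/
structure IsPeriodicHarmonicOn {E : Type*} [NormedAddCommGroup E] [NormedSpace ℝ E]
    (f : ℝ × ℝ → E) (s : Set ℝ) (T : ℝ) : Prop where
  exists_contDiffOn : ∃ U : Set (ℝ × ℝ), IsOpen U ∧ univ ×ˢ s ⊆ U ∧ ContDiffOn ℝ 2 f U
  laplacian_eq_zero : ∀ u, ∀ v ∈ s,
    deriv (deriv fun x ↦ f (x, v)) u + deriv (deriv fun y ↦ f (u, y)) v = 0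
  periodic : ∀ v ∈ s, Periodic (fun u ↦ f (u, v)) T

/-- The part of `sliceFourierCoeff hab f n` proportional to `exp (l * v)`, when that coefficient
is a combination of `exp (l * v)` and `exp (-l * v)` with `l ≠ 0`. At `l = 0` the convention
`0⁻¹ = 0` makes it half of the coefficient. -/
noncomputable def expMode {a b : ℝ} (hab : a < b) (f : ℝ × ℝ → ℂ) (n : ℤ) (l v : ℝ) : ℂ :=
  2⁻¹ * (sliceFourierCoeff hab f n v + l⁻¹ • sliceFourierCoeff hab (derivSnd f) n v)

variable {a b : ℝ} {f : ℝ × ℝ → ℂ} {s : Set ℝ} {v : ℝ}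

lemma expMode_add_expMode_neg (hab : a < b) (f : ℝ × ℝ → ℂ) (n : ℤ) (l v : ℝ) :
    expMode hab f n l v + expMode hab f n (-l) v = sliceFourierCoeff hab f n v := by
  simp only [expMode, inv_neg, neg_smul]
  ring

namespace IsPeriodicHarmonicOn

section Slice

variable {E : Type*} [NormedAddCommGroup E] [NormedSpace ℝ E] {f : ℝ × ℝ → E} {T : ℝ}

lemma contDiff_slice (h : IsPeriodicHarmonicOn f s T) (hv : v ∈ s) :
    ContDiff ℝ 2 fun u ↦ f (u, v) := by
  obtain ⟨U, -, hsU, hf⟩ := h.exists_contDiffOn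
  exact contDiffOn_univ.1 (hf.comp (by fun_prop) fun u _ ↦ hsU ⟨mem_univ u, hv⟩)

lemma continuous_derivSnd_slice (h : IsPeriodicHarmonicOn f s T) (hv : v ∈ s) :
    Continuous fun u ↦ derivSnd f (u, v) := by
  obtain ⟨U, hU, hsU, hf⟩ := h.exists_contDiffOn
  exact (contDiffOn_derivSnd (m := 1) hU hf (by norm_num)).continuousOn.comp_continuous
    (by fun_prop) fun u ↦ hsU ⟨mem_univ u, hv⟩

end Slice

variable (hab : a < b)

lemma hasDerivAt_sliceFourierCoeff {E : Type*} [NormedAddCommGroup E] [NormedSpace ℂ E]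
    {f : ℝ × ℝ → E} {T : ℝ} (h : IsPeriodicHarmonicOn f s T) (hv : v ∈ s) (n : ℤ) :
    HasDerivAt (sliceFourierCoeff hab f n) (sliceFourierCoeff hab (derivSnd f) n v) v := by
  obtain ⟨U, hU, hsU, hf⟩ := h.exists_contDiffOn
  exact _root_.hasDerivAt_sliceFourierCoeff hab hU (hf.of_le one_le_two)
    ((prod_mono (subset_univ _) (singleton_subset_iff.2 hv)).trans hsU) n

lemma sliceFourierCoeff_derivSnd_derivSnd (h : IsPeriodicHarmonicOn f s (b - a)) (hv : v ∈ s)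
    (n : ℤ) :
    sliceFourierCoeff hab (derivSnd (derivSnd f)) n v
      = (2 * π * n / (b - a)) ^ 2 • sliceFourierCoeff hab f n v := by
  have hneg : (fun u ↦ derivSnd (derivSnd f) (u, v))
      = (-1 : ℂ) • deriv (deriv fun x ↦ f (x, v)) := funext fun u ↦ by
    simpa using! eq_neg_of_add_eq_zero_right (h.laplacian_eq_zero u v hv)
  simp only [sliceFourierCoeff]
  rw [hneg, fourierCoeffOn.const_smul, fourierCoeffOn_deriv_deriv_of_periodic hab
    (h.contDiff_slice hv) (h.periodic v hv)]
  simp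

lemma hasDerivAt_sliceFourierCoeff_derivSnd (h : IsPeriodicHarmonicOn f s (b - a)) (hv : v ∈ s)
    (n : ℤ) :
    HasDerivAt (sliceFourierCoeff hab (derivSnd f) n)
      ((2 * π * n / (b - a)) ^ 2 • sliceFourierCoeff hab f n v) v := by
  obtain ⟨U, hU, hsU, hf⟩ := h.exists_contDiffOn
  rw [← h.sliceFourierCoeff_derivSnd_derivSnd hab hv]
  exact _root_.hasDerivAt_sliceFourierCoeff hab hU (contDiffOn_derivSnd hU hf (by norm_num))
    ((prod_mono (subset_univ _) (singleton_subset_iff.2 hv)).trans hsU) n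

lemma sliceFourierCoeff_zero_eq_add (h : IsPeriodicHarmonicOn f s (b - a)) (hs : Convex ℝ s)
    {w : ℝ} (hw : w ∈ s) (hv : v ∈ s) :
    sliceFourierCoeff hab f 0 v
      = sliceFourierCoeff hab f 0 w + (v - w) • sliceFourierCoeff hab (derivSnd f) 0 w :=
  eq_add_smul_of_hasDerivWithinAt_zero hs
    (fun _ ht ↦ (h.hasDerivAt_sliceFourierCoeff hab ht 0).hasDerivWithinAt)
    (fun _ ht ↦ by simpa using
      (h.hasDerivAt_sliceFourierCoeff_derivSnd hab ht 0).hasDerivWithinAt) hw hv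

lemma expMode_eq_exp_mul (h : IsPeriodicHarmonicOn f s (b - a)) (hs : Convex ℝ s) {n : ℤ} {l : ℝ}
    (hl : l ≠ 0) (hln : l ^ 2 = (2 * π * n / (b - a)) ^ 2) {w : ℝ} (hw : w ∈ s) (hv : v ∈ s) :
    expMode hab f n l v = exp (l * (v - w)) * expMode hab f n l w := by
  have hsol := add_inv_smul_eq_exp_smul_of_hasDerivWithinAt hs hl
    (fun _ ht ↦ (h.hasDerivAt_sliceFourierCoeff hab ht n).hasDerivWithinAt)
    (fun _ ht ↦ by
      rw [hln]; exact (h.hasDerivAt_sliceFourierCoeff_derivSnd hab ht n).hasDerivWithinAt) hw hv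
  rw [expMode, hsol, expMode, Complex.real_smul]
  ring

lemma summable_sliceFourierCoeff (h : IsPeriodicHarmonicOn f s (b - a)) (hv : v ∈ s) :
    Summable fun n ↦ sliceFourierCoeff hab f n v :=
  summable_fourierCoeffOn_of_periodic hab ((h.contDiff_slice hv).of_le one_le_two)
    (h.periodic v hv)

lemma summable_expMode (h : IsPeriodicHarmonicOn f s (b - a)) (hv : v ∈ s) (r : ℝ) :
    Summable fun n : ℤ ↦ expMode hab f n (n / r) v := by
  have hderiv : Summable fun n : ℤ ↦ sliceFourierCoeff hab (derivSnd f) n v / n :=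
    summable_fourierCoeffOn_div hab
      (memLp_two_of_continuousOn_Icc (h.continuous_derivSnd_slice hv).continuousOn)
  refine (((h.summable_sliceFourierCoeff hab hv).add (hderiv.mul_left (r : ℂ))).mul_left 2⁻¹).congr
    fun n ↦ ?_
  simp only [expMode, inv_div, Complex.real_smul]
  push_cast
  ring

lemma hasSum_sliceFourierCoeff (h : IsPeriodicHarmonicOn f s (b - a)) (hv : v ∈ s) {r : ℝ}
    (hr : b - a = 2 * π * r) (u : ℝ) :
    HasSum (fun n : ℤ ↦ sliceFourierCoeff hab f n v * Complex.exp ((n * u / r : ℝ) * Complex.I))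
      (f (u, v)) := by
  simpa only [fourier_apply_of_eq_two_pi_mul hr] using!
    hasSum_fourierCoeffOn_of_periodic hab (h.contDiff_slice hv).continuous (h.periodic v hv)
      (h.summable_sliceFourierCoeff hab hv) u

-- Reindexing the modes with exponent `-n / r` by `n ↦ -n` groups the terms by the factor
-- `exp (n * v / r)`.
lemma hasSum_expMode (h : IsPeriodicHarmonicOn f s (b - a)) (hv : v ∈ s) {r : ℝ}
    (hr : b - a = 2 * π * r) (u : ℝ) :
    HasSum (fun n : ℤ ↦
        expMode hab f n (n / r) v * Complex.exp ((n * u / r : ℝ) * Complex.I)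
          + expMode hab f (-n) (n / r) v * Complex.exp (-(n * u / r : ℝ) * Complex.I))
      (f (u, v)) := by
  have hsum (q : ℝ) : Summable fun n : ℤ ↦
      expMode hab f n (n / q) v * Complex.exp ((n * u / r : ℝ) * Complex.I) :=
    .of_norm_bounded (h.summable_expMode hab hv q).norm fun n ↦ by
      rw [norm_mul, Complex.norm_exp_ofReal_mul_I, mul_one]
  have hsplit := (hsum r).hasSum.add (hsum (-r)).hasSum
  have hreindex := (Equiv.neg ℤ).hasSum_iff.2 (hsum (-r)).hasSum
  simp only [← add_mul, div_neg, expMode_add_expMode_neg] at hsplit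
  simp only [comp_def, Equiv.neg_apply, Int.cast_neg, neg_mul, neg_div, div_neg, neg_neg,
    Complex.ofReal_neg] at hreindex
  rw [(h.hasSum_sliceFourierCoeff hab hv hr u).unique hsplit]
  simpa only [neg_mul] using (hsum r).hasSum.add hreindex

lemma expMode_intCast_div_eq_exp_mul (h : IsPeriodicHarmonicOn f s (b - a)) (hs : Convex ℝ s)
    (h0 : 0 ∈ s) (hv : v ∈ s) {r : ℝ} (hr : b - a = 2 * π * r) {n k : ℤ} (hk : k ≠ 0)
    (hnk : n ^ 2 = k ^ 2) :
    expMode hab f n (k / r) v = exp (k * v / r) * expMode hab f n (k / r) 0 := by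
  have hr0 : r ≠ 0 := by
    rintro rfl
    simp [sub_eq_zero, hab.ne'] at hr
  have hfreq : ((k : ℝ) / r) ^ 2 = (2 * π * n / (b - a)) ^ 2 := by
    have hnkR : (n : ℝ) ^ 2 = k ^ 2 := mod_cast hnk
    rw [hr, mul_div_mul_left _ _ two_pi_pos.ne', div_pow, div_pow, hnkR]
  rw [h.expMode_eq_exp_mul hab hs (div_ne_zero (mod_cast hk) hr0) hfreq h0 hv, sub_zero,
    div_mul_eq_mul_div]

theorem exists_hasSum_exp_mul_cos_add_sin (h : IsPeriodicHarmonicOn f s (b - a))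
    (hs : Convex ℝ s) (h0 : 0 ∈ s) {r : ℝ} (hr : b - a = 2 * π * r) :
    ∃ α γ : ℤ → ℂ, ∀ u, ∀ v ∈ s,
      HasSum (fun k : {k : ℤ // k ≠ 0} ↦
          α k * exp (k * v / r) * cos (k * u / r) + γ k * exp (k * v / r) * sin (k * u / r))
        (f (u, v) - sliceFourierCoeff hab f 0 v) := by
  refine ⟨fun k ↦ expMode hab f k (k / r) 0 + expMode hab f (-k) (k / r) 0,
    fun k ↦ (expMode hab f k (k / r) 0 - expMode hab f (-k) (k / r) 0) * Complex.I,
    fun u v hv ↦ ?_⟩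
  have hzero := expMode_add_expMode_neg hab f 0 0 v
  have hsum := hasSum_subtype_ne (h.hasSum_expMode hab hv hr u) 0
  simp only [Int.cast_zero, zero_mul, zero_div, Complex.ofReal_zero, neg_zero, Complex.exp_zero,
    mul_one] at hsum hzero
  rw [hzero] at hsum
  refine hsum.congr_fun ?_
  rintro ⟨k, hk⟩
  rw [h.expMode_intCast_div_eq_exp_mul hab hs h0 hv hr hk rfl,
    h.expMode_intCast_div_eq_exp_mul hab hs h0 hv hr hk (neg_sq k), Complex.exp_mul_I,
    Complex.exp_mul_I, Complex.cos_neg, Complex.sin_neg]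
  push_cast
  ring

lemma sliceFourierCoeff_zero_eq_convexComb (h : IsPeriodicHarmonicOn f s (b - a))
    (hs : Convex ℝ s) (h0 : 0 ∈ s) {C : ℝ} (hC : C ∈ s) (hC0 : C ≠ 0) (hv : v ∈ s) :
    sliceFourierCoeff hab f 0 v
      = (1 - v / C) • sliceFourierCoeff hab f 0 0 + (v / C) • sliceFourierCoeff hab f 0 C := by
  rw [h.sliceFourierCoeff_zero_eq_add hab hs h0 hv, h.sliceFourierCoeff_zero_eq_add hab hs h0 hC]
  match_scalars <;> field_simp <;> ring

end IsPeriodicHarmonicOn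

end PeriodicHarmonic

section RealValued

lemma deriv_ofReal_comp (g : ℝ → ℝ) :
    deriv (fun x ↦ (g x : ℂ)) = fun x ↦ ((deriv g x : ℝ) : ℂ) := by
  funext x
  by_cases hg : DifferentiableAt ℝ g x
  · exact hg.hasDerivAt.ofReal_comp.deriv
  · have hgC : ¬DifferentiableAt ℝ (fun x ↦ (g x : ℂ)) x := fun h ↦
      hg (Complex.reCLM.differentiableAt.comp x h)
    rw [deriv_zero_of_not_differentiableAt hg, deriv_zero_of_not_differentiableAt hgC,
      Complex.ofReal_zero]

lemma IsPeriodicHarmonicOn.ofReal_comp {F : ℝ × ℝ → ℝ} {s : Set ℝ} {T : ℝ}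
    (h : IsPeriodicHarmonicOn F s T) : IsPeriodicHarmonicOn (fun p ↦ (F p : ℂ)) s T where
  exists_contDiffOn := by
    obtain ⟨U, hU, hsU, hF⟩ := h.exists_contDiffOn
    exact ⟨U, hU, hsU, Complex.ofRealCLM.contDiff.comp_contDiffOn hF⟩
  laplacian_eq_zero u v hv := by
    simp only [deriv_ofReal_comp]
    exact_mod_cast h.laplacian_eq_zero u v hv
  periodic v hv := (h.periodic v hv).comp Complex.ofReal

lemma sliceFourierCoeff_ofReal_comp_zero {a b : ℝ} (hab : a < b) (F : ℝ × ℝ → ℝ) (v : ℝ) :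
    sliceFourierCoeff hab (fun p ↦ (F p : ℂ)) 0 v = ((⨍ u in a..b, F (u, v) : ℝ) : ℂ) := by
  simp [sliceFourierCoeff, fourierCoeffOn_zero, interval_average_eq,
    intervalIntegral.integral_ofReal]

lemma intervalAverage_nonneg {a b : ℝ} (hab : a ≤ b) {g : ℝ → ℝ} (hg : ∀ x ∈ Icc a b, 0 ≤ g x) :
    0 ≤ ⨍ x in a..b, g x := by
  rw [interval_average_eq]
  exact smul_nonneg (inv_nonneg.2 (sub_nonneg.2 hab))
    (intervalIntegral.integral_nonneg hab hg)

end RealValued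

theorem periodic_harmonic_fourier_strip_general {F : ℝ × ℝ → ℝ} {C b : ℝ} (hC : 0 < C)
    (hb : 0 < b) (h : IsPeriodicHarmonicOn F (Icc 0 C) (2 * π * b)) :
    ∃ a c : ℤ → ℝ, a 0 = (⨍ u in 0..2 * π * b, F (u, 0)) ∧
      c 0 = (⨍ u in 0..2 * π * b, F (u, C)) / C ∧ ∀ u, ∀ v ∈ Icc 0 C,
      HasSum (fun k : {k : ℤ // k ≠ 0} ↦
          a k * exp (k * v / b) * cos (k * u / b) + c k * exp (k * v / b) * sin (k * u / b))
        (F (u, v) - (a 0 * (1 - v / C) + c 0 * v)) := by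
  have hT : 0 < 2 * π * b := by positivity
  have hcomplex : IsPeriodicHarmonicOn (fun p ↦ (F p : ℂ)) (Icc 0 C) (2 * π * b - 0) := by
    simpa using h.ofReal_comp
  have h0 : (0 : ℝ) ∈ Icc 0 C := left_mem_Icc.2 hC.le
  obtain ⟨α, γ, hseries⟩ := hcomplex.exists_hasSum_exp_mul_cos_add_sin hT (convex_Icc 0 C) h0
    (sub_zero _)
  refine ⟨update (fun k ↦ (α k).re) 0 (⨍ u in 0..2 * π * b, F (u, 0)),
    update (fun k ↦ (γ k).re) 0 ((⨍ u in 0..2 * π * b, F (u, C)) / C),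
    update_self .., update_self .., fun u v hv ↦ ?_⟩
  have hre := Complex.hasSum_re (hseries u v hv)
  rw [hcomplex.sliceFourierCoeff_zero_eq_convexComb hT (convex_Icc 0 C) h0
    (right_mem_Icc.2 hC.le) hC.ne' hv] at hre
  simp only [sliceFourierCoeff_ofReal_comp_zero] at hre
  convert hre using 1
  · funext ⟨k, hk⟩
    simp [hk, -Complex.ofReal_exp, -Complex.ofReal_cos, -Complex.ofReal_sin]
  · simp only [update_self, Complex.real_smul, ← Complex.ofReal_mul, ← Complex.ofReal_add,
      ← Complex.ofReal_sub, Complex.ofReal_re]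
    ring

/-- A positive harmonic function on a neighborhood of the horizontal strip `0 ≤ v ≤ C`
which is `2πb`-periodic in `u` has the form
`Σ_{k≠0} (a_k e^{kv/b} cos(ku/b) + b_k e^{kv/b} sin(ku/b)) + a₀(1 - v/C) + b₀ v`
with `a₀ ≥ 0` and `b₀ ≥ 0`. -/
theorem periodic_harmonic_fourier_strip
    (C : ℝ) (hC : 0 < C)
    (F : ℝ → ℝ → ℝ) (U : Set (ℝ × ℝ)) (hU : IsOpen U)
    (hUH : {p : ℝ × ℝ | 0 ≤ p.2 ∧ p.2 ≤ C} ⊆ U)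
    (hsmooth : ContDiffOn ℝ (⊤ : ℕ∞) (fun p : ℝ × ℝ => F p.1 p.2) U)
    (hharm : ∀ p ∈ U,
      deriv (deriv (fun u => F u p.2)) p.1 + deriv (deriv (fun v => F p.1 v)) p.2 = 0)
    (hpos : ∀ u v : ℝ, 0 ≤ v → v ≤ C → 0 ≤ F u v)
    (b : ℕ) (hb : 0 < b)
    (hper : ∀ u v : ℝ, 0 ≤ v → v ≤ C → F (u + 2 * π * b) v = F u v) :
    ∃ a c : ℤ → ℝ, 0 ≤ a 0 ∧ 0 ≤ c 0 ∧ ∀ u v : ℝ, 0 ≤ v → v ≤ C →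
      F u v =
        (∑' k : {k : ℤ // k ≠ 0},
          (a k.1 * Real.exp ((k.1 : ℝ) * v / b) * Real.cos ((k.1 : ℝ) * u / b)
            + c k.1 * Real.exp ((k.1 : ℝ) * v / b) * Real.sin ((k.1 : ℝ) * u / b)))
        + a 0 * (1 - v / C) + c 0 * v := by
  have hT : 0 ≤ 2 * π * (b : ℝ) := by positivity
  have hF : IsPeriodicHarmonicOn (fun p ↦ F p.1 p.2) (Icc 0 C) (2 * π * b) :=
    ⟨⟨U, hU, fun p hp ↦ hUH hp.2, mod_cast contDiffOn_infty.1 hsmooth 2⟩,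
      fun u v hv ↦ hharm (u, v) (hUH hv), fun v hv u ↦ hper u v hv.1 hv.2⟩
  obtain ⟨a, c, ha, hc, hsum⟩ :=
    periodic_harmonic_fourier_strip_general hC (Nat.cast_pos.2 hb) hF
  refine ⟨a, c, ?_, ?_, fun u v h0 hvC ↦ ?_⟩
  · exact ha ▸ intervalAverage_nonneg hT fun u _ ↦ hpos u 0 le_rfl hC.le
  · exact hc ▸ div_nonneg (intervalAverage_nonneg hT fun u _ ↦ hpos u C hC.le le_rfl) hC.le
  · rw [(hsum u v ⟨h0, hvC⟩).tsum_eq]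
    ring
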